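/- The Poincaré polynomial R_G(t,q) = Σ_i t^i · qdim(H^i(G)) is multiplicative under disjoint union: R_{G₁⊔G₂}(t,q) = R_{G₁}(t,q) · R_{G₂}(t,q). -/

import Mathlib

/-- A finite multigraph (possibly with loops and multiple edges), with
vertex type `V` and edges indexed by `Fin n`, edge `e` having endpoints `ends e`. -/
structure OGraph where
  V : Type
  [finV : Fintype V]
  n : ℕ
  ends : Fin n → Sym2 V

attribute [instance] OGraph.finV

namespace OGraph

variable (G : OGraph)

/-- Two vertices are related if some edge in `s` joins them. -/
def rel (s : Finset (Fin G.n)) (u v : G.V) : Prop := ∃ e ∈ s, G.ends e = s(u, v)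

/-- The set of connected components of the spanning subgraph `[G:s]`. -/
def Comp (s : Finset (Fin G.n)) : Type := Quot (G.rel s)

/-- `k(s)`: the number of connected components of the spanning subgraph `[G:s]`. -/
noncomputable def ncomp (s : Finset (Fin G.n)) : ℕ := Nat.card (G.Comp s)

/-- The number of proper colorings of `G` with `m` colors: the value `P_G(m)` of
the chromatic polynomial at the natural number `m`. -/
noncomputable def chromatic (m : ℕ) : ℕ :=
  Nat.card {c : G.V → Fin m // ∀ e u v, G.ends e = s(u, v) → c u ≠ c v}

end OGraph

namespace OGraph

/-- The map on quotients induced by an implication of relations. -/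
def qmap {V : Type} {r r' : V → V → Prop} (h : ∀ u v, r u v → r' u v) :
    Quot r → Quot r' :=
  Quot.lift (Quot.mk r') fun u v huv => Quot.sound (h u v huv)

variable (G : OGraph)

/-- An enhanced state: a subset `s` of the edges together with an assignment of a
color (`1` or `x`; a component is "colored `x`" when the predicate holds) to each
connected component of the spanning subgraph `[G:s]`. -/
abbrev EState := Σ s : Finset (Fin G.n), (G.Comp s → Prop)

/-- `j(S)`: the number of components colored `x` in the enhanced state `S`. -/
noncomputable def jdeg (S : G.EState) : ℕ := Nat.card {k : G.Comp S.1 // S.2 k}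

open Classical in
/-- The enhanced state(s) obtained from `S` by adding the edge `e`: zero if `e`
already belongs to `S` or if the added edge merges two components both colored `x`
(the product `x∗x = 0`); otherwise the enhanced state on `insert e s` whose
coloring is obtained from that of `S` using the product
`1∗1 = 1`, `1∗x = x∗1 = x`. -/
noncomputable def addEdge (S : G.EState) (e : Fin G.n) : G.EState →₀ ℤ :=
  if e ∈ S.1 then 0
  else
    let p : G.Comp S.1 → G.Comp (insert e S.1) :=
      qmap fun _ _ huv => huv.elim fun f hf => ⟨f, Finset.mem_insert_of_mem hf.1, hf.2⟩
    if ∃ k1 k2 : G.Comp S.1, k1 ≠ k2 ∧ p k1 = p k2 ∧ S.2 k1 ∧ S.2 k2 then 0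
    else Finsupp.single ⟨insert e S.1, fun K => ∃ k, p k = K ∧ S.2 k⟩ 1

/-- The differential applied to a single enhanced state: the signed sum, over all
edges `e` not in `S`, of the states obtained by adding `e`; the sign is `(-1)^{n(e)}`
where `n(e)` is the number of edges of `S` ordered before `e`. -/
noncomputable def dState (S : G.EState) : G.EState →₀ ℤ :=
  ∑ e : Fin G.n, ((-1 : ℤ) ^ (S.1.filter fun f => f < e).card) • G.addEdge S e

/-- The differential of the graph cohomology complex, as a linear endomorphism of
the free `ℤ`-module generated by all enhanced states. -/
noncomputable def diff : (G.EState →₀ ℤ) →ₗ[ℤ] (G.EState →₀ ℤ) :=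
  Finsupp.lsum ℤ fun S => LinearMap.toSpanSingleton ℤ _ (G.dState S)

/-- The chain group `C^{i,j}(G)`: the free `ℤ`-module spanned by the enhanced
states with `i` edges and `j` components colored `x`, as a submodule of the free
module on all enhanced states. -/
noncomputable def Cmod (i j : ℕ) : Submodule ℤ (G.EState →₀ ℤ) :=
  Finsupp.supported ℤ ℤ {S : G.EState | S.1.card = i ∧ G.jdeg S = j}

/-- The cocycles of bidegree `(i,j)`. -/
noncomputable def Zmod (i j : ℕ) : Submodule ℤ (G.EState →₀ ℤ) :=
  LinearMap.ker G.diff ⊓ G.Cmod i j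

/-- The coboundaries: `0` for `i = 0`, the image of `C^{i,j}` for `i + 1`. -/
noncomputable def Bmod : ℕ → ℕ → Submodule ℤ (G.EState →₀ ℤ)
  | 0, _ => ⊥
  | i + 1, j => Submodule.map G.diff (G.Cmod i j)

/-- The graph cohomology group `H^{i,j}(G)` (cocycles modulo coboundaries in
bidegree `(i,j)`). -/
noncomputable def Hmod (i j : ℕ) : Type :=
  (G.Zmod i j).toAddSubgroup ⧸
    (AddSubgroup.comap (G.Zmod i j).toAddSubgroup.subtype (G.Bmod i j).toAddSubgroup)

noncomputable instance (i j : ℕ) : AddCommGroup (G.Hmod i j) := by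
  delta Hmod; infer_instance

end OGraph

namespace OGraph

variable (G : OGraph)

/-- The chain group `C^i(G)`: the free `ℤ`-module spanned by the enhanced states
with `i` edges. -/
noncomputable def CmodU (i : ℕ) : Submodule ℤ (G.EState →₀ ℤ) :=
  Finsupp.supported ℤ ℤ {S : G.EState | S.1.card = i}

/-- The cocycles of degree `i`. -/
noncomputable def ZmodU (i : ℕ) : Submodule ℤ (G.EState →₀ ℤ) :=
  LinearMap.ker G.diff ⊓ G.CmodU i

/-- The coboundaries: `0` for `i = 0`, the image of `C^i` for `i + 1`. -/
noncomputable def BmodU : ℕ → Submodule ℤ (G.EState →₀ ℤ)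
  | 0 => ⊥
  | i + 1 => Submodule.map G.diff (G.CmodU i)

/-- The graph cohomology group `H^i(G)`. -/
noncomputable def HmodU (i : ℕ) : Type :=
  (G.ZmodU i).toAddSubgroup ⧸
    (AddSubgroup.comap (G.ZmodU i).toAddSubgroup.subtype (G.BmodU i).toAddSubgroup)

noncomputable instance (i : ℕ) : AddCommGroup (G.HmodU i) := by
  delta HmodU; infer_instance

/-- The disjoint union `G₁ ⊔ G₂` of two graphs, with the edges of `G₁` ordered
before those of `G₂`. -/
noncomputable def disj (G₁ G₂ : OGraph) : OGraph :=
  ⟨G₁.V ⊕ G₂.V, G₁.n + G₂.n,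
    fun k => (finSumFinEquiv.symm k).elim
      (fun a => (G₁.ends a).map Sum.inl) (fun b => (G₂.ends b).map Sum.inr)⟩

end OGraph

namespace OGraph

/-- The graded dimension `Σ_j q^j · rank H^{i,j}(G)` of the `i`-th graph
cohomology group. -/
noncomputable def qdimH (G : OGraph) (i : ℕ) : PowerSeries ℤ :=
  PowerSeries.mk fun j => (Module.finrank ℤ (G.Hmod i j) : ℤ)

/-- The Poincaré polynomial `R_G(t,q) = Σ_i t^i · qdim H^i(G)`, as a polynomial in
`t` with coefficients power series in `q`. -/
noncomputable def Rpoly (G : OGraph) : Polynomial (PowerSeries ℤ) :=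
  ∑ i ∈ Finset.range (G.n + 1), Polynomial.C (G.qdimH i) * Polynomial.X ^ i

end OGraph

set_option linter.unusedSectionVars false

namespace KunnethAux
open Matrix

theorem exists_ginv {S : Type*} [Fintype S] [DecidableEq S] (D : Matrix S S ℚ) :
    ∃ h : Matrix S S ℚ, D * h * D = D := by
  obtain ⟨g0, hg0⟩ := LinearMap.exists_rightInverse_of_surjective (Matrix.toLin' D).rangeRestrict
    (LinearMap.range_rangeRestrict _)
  obtain ⟨g, hg⟩ := LinearMap.exists_extend g0
  refine ⟨LinearMap.toMatrix' g, ?_⟩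
  apply (Matrix.toLin' (R := ℚ)).injective
  rw [Matrix.toLin'_mul, Matrix.toLin'_mul, Matrix.toLin'_toMatrix']
  apply LinearMap.ext
  intro x
  have h1 := LinearMap.congr_fun hg0 ((Matrix.toLin' D).rangeRestrict x)
  have h2 := LinearMap.congr_fun hg ((Matrix.toLin' D).rangeRestrict x)
  have h3 := congrArg Subtype.val h1
  simp only [LinearMap.comp_apply, LinearMap.id_apply, Submodule.subtype_apply] at h2 h3 ⊢
  rw [LinearMap.codRestrict_apply] at h2
  rw [h2]
  exact h3

/-- `D` raises degree by one. -/
def Up {S : Type*} (a b : S → ℕ) (D : Matrix S S ℚ) : Prop :=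
  ∀ t s, D t s ≠ 0 → a t = a s + 1 ∧ b t = b s

theorem exists_h {S : Type*} [Fintype S] [DecidableEq S] (a b : S → ℕ) (D : Matrix S S ℚ)
    (hD : Up a b D) :
    ∃ h : Matrix S S ℚ, D * h * D = D ∧ Up a b hᵀ := by
  obtain ⟨h0, hh⟩ := exists_ginv D
  refine ⟨Matrix.of fun s t => if a t = a s + 1 ∧ b t = b s then h0 s t else 0, ?_, ?_⟩
  · ext t s
    by_cases hts : a t = a s + 1 ∧ b t = b s
    · conv_rhs => rw [← hh]
      simp only [Matrix.mul_apply, Finset.sum_mul]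
      refine Finset.sum_congr rfl fun y _ => Finset.sum_congr rfl fun x _ => ?_
      by_cases h1 : D t x = 0
      · simp [h1]
      by_cases h2 : D y s = 0
      · simp [h2]
      have := hD _ _ h1
      have := hD _ _ h2
      rw [Matrix.of_apply, if_pos (by omega)]
    · have h0 : D t s = 0 := by
        by_contra h; exact hts (hD _ _ h)
      rw [h0]
      simp only [Matrix.mul_apply, Finset.sum_mul]
      refine Finset.sum_eq_zero fun y _ => Finset.sum_eq_zero fun x _ => ?_
      by_cases h1 : D t x = 0
      · simp [h1]
      by_cases h2 : D y s = 0
      · simp [h2]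
      have := hD _ _ h1
      have := hD _ _ h2
      rw [Matrix.of_apply, if_neg (by omega)]
      simp
  · intro t s hts
    by_contra hc
    apply hts
    simp [hc]

/-- degree projection -/
def E {S : Type*} [DecidableEq S] (a b : S → ℕ) (i j : ℕ) : Matrix S S ℚ :=
  Matrix.diagonal fun s => if a s = i ∧ b s = j then 1 else 0

section
variable {S : Type*} [Fintype S] [DecidableEq S] {a b : S → ℕ} {D h : Matrix S S ℚ}

theorem Up.comm (hD : Up a b D) (i j : ℕ) : D * E a b i j = E a b (i+1) j * D := by
  ext t s
  simp only [E, Matrix.mul_diagonal, Matrix.diagonal_mul]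
  by_cases h : D t s = 0
  · simp [h]
  have := hD _ _ h
  by_cases h2 : a s = i ∧ b s = j
  · rw [if_pos h2, if_pos (by omega)]; ring
  · rw [if_neg h2, if_neg (by omega)]; ring

theorem Up.comm' (hh : Up a b hᵀ) (i j : ℕ) : h * E a b (i+1) j = E a b i j * h := by
  ext t s
  simp only [E, Matrix.mul_diagonal, Matrix.diagonal_mul]
  by_cases h : h t s = 0
  · simp [h]
  have := hh s t h
  by_cases h2 : a t = i ∧ b t = j
  · rw [if_pos h2, if_pos (by omega)]; ring
  · rw [if_neg h2, if_neg (by omega)]; ring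

theorem Up.comm0 (hh : Up a b hᵀ) (j : ℕ) : h * E a b 0 j = 0 := by
  ext t s
  simp only [E, Matrix.mul_diagonal, Matrix.zero_apply]
  by_cases h : h t s = 0
  · simp [h]
  have := hh s t h
  rw [if_neg (by omega)]; ring

theorem E_sq (i j : ℕ) : E a b i j * E a b i j = E a b i j := by
  simp [E]

theorem trace_idem (e : Matrix S S ℚ) (he : e * e = e) : e.trace = e.rank := by
  have hi : IsIdempotentElem (Matrix.toLin' e) := by
    unfold IsIdempotentElem
    rw [Module.End.mul_eq_comp, ← Matrix.toLin'_mul, he]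
  have := (LinearMap.IsIdempotentElem.isProj_range _ hi).trace
  rw [Matrix.trace_toLin'_eq] at this
  rw [this, Matrix.rank, Matrix.toLin'_apply']

theorem rank_eq_trace (hD : Up a b D) (hh : Up a b hᵀ) (hg : D * h * D = D) (i j : ℕ) :
    ((D * E a b i j).rank : ℚ) = (h * D * E a b i j).trace := by
  have key : E a b i j * (h * D) = h * D * E a b i j := by
    rw [← mul_assoc, ← hh.comm', mul_assoc, ← hD.comm, mul_assoc]
  rw [trace_idem]
  · congr 1
    apply le_antisymm
    · have : D * E a b i j = D * (h * D * E a b i j) := by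
        rw [← mul_assoc, ← mul_assoc, hg]
      conv_lhs => rw [this]
      exact Matrix.rank_mul_le_right _ _
    · rw [mul_assoc]; exact Matrix.rank_mul_le_right _ _
  · calc h * D * E a b i j * (h * D * E a b i j) = h * D * (E a b i j * (h * D)) * E a b i j := by
          simp only [mul_assoc]
      _ = h * (D * h * D) * (E a b i j * E a b i j) := by
          rw [key]; simp only [mul_assoc]
      _ = _ := by rw [hg, E_sq]

theorem rank_eq_trace' (hD : Up a b D) (hh : Up a b hᵀ) (hg : D * h * D = D) (i j : ℕ) :
    ((D * E a b i j).rank : ℚ) = (D * h * E a b (i+1) j).trace := by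
  rw [rank_eq_trace hD hh hg, mul_assoc D, hh.comm', ← mul_assoc, mul_assoc,
    Matrix.trace_mul_comm]

end

section tensor
variable {S T : Type*} [Fintype S] [DecidableEq S] [Fintype T] [DecidableEq T]
open scoped Kronecker

/-- sign matrix -/
def eps (a : S → ℕ) : Matrix S S ℚ := Matrix.diagonal fun s => (-1) ^ a s

theorem eps_sq (a : S → ℕ) : eps a * eps a = 1 := by
  simp [eps, ← mul_pow]

theorem eps_D {a b : S → ℕ} {D : Matrix S S ℚ} (hD : Up a b D) : D * eps a = - (eps a * D) := by
  ext t s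
  simp only [eps, Matrix.mul_diagonal, Matrix.diagonal_mul, Matrix.neg_apply]
  by_cases h : D t s = 0
  · simp [h]
  have := hD _ _ h
  rw [this.1, pow_succ]; ring

theorem eps_h {a b : S → ℕ} {D : Matrix S S ℚ} (hD : Up a b Dᵀ) : D * eps a = - (eps a * D) := by
  ext t s
  simp only [eps, Matrix.mul_diagonal, Matrix.diagonal_mul, Matrix.neg_apply]
  by_cases h : D t s = 0
  · simp [h]
  have := hD s t h
  rw [this.1, pow_succ]; ring

variable {a b : S → ℕ} {a' b' : T → ℕ} {D h : Matrix S S ℚ} {D' h' : Matrix T T ℚ}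

theorem neg_kron (A : Matrix S S ℚ) (B : Matrix T T ℚ) : (-A) ⊗ₖ B = -(A ⊗ₖ B) := by
  ext ⟨_, _⟩ ⟨_, _⟩; simp

theorem sub_kron (A A' : Matrix S S ℚ) (B : Matrix T T ℚ) :
    (A - A') ⊗ₖ B = A ⊗ₖ B - A' ⊗ₖ B := by
  ext ⟨_, _⟩ ⟨_, _⟩; simp [sub_mul]

theorem kron_sub (A : Matrix S S ℚ) (B B' : Matrix T T ℚ) :
    A ⊗ₖ (B - B') = A ⊗ₖ B - A ⊗ₖ B' := by
  ext ⟨_, _⟩ ⟨_, _⟩; simp [mul_sub]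

/-- tensor homotopy -/
def tH (a : S → ℕ) (D h : Matrix S S ℚ) (h' : Matrix T T ℚ) : Matrix (S × T) (S × T) ℚ :=
  h ⊗ₖ 1 + (eps a * (1 - D * h - h * D)) ⊗ₖ h'

/-- tensor differential -/
def tD (a : S → ℕ) (D : Matrix S S ℚ) (D' : Matrix T T ℚ) : Matrix (S × T) (S × T) ℚ :=
  D ⊗ₖ 1 + eps a ⊗ₖ D'

theorem tensor_htpy (hD : Up a b D) (hh : Up a b hᵀ) (hg : D * h * D = D) (h2 : D * D = 0) :
    1 - tD a D D' * tH a D h h' - tH a D h h' * tD a D D' =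
      (1 - D * h - h * D) ⊗ₖ (1 - D' * h' - h' * D') := by
  have h2' : ∀ X, D * (D * X) = 0 := fun X => by rw [← mul_assoc, h2, zero_mul]
  have hg1 : D * (h * D) = D := by rw [← mul_assoc, hg]
  have hg2 : ∀ X, D * (h * (D * X)) = D * X := fun X => by
    rw [← mul_assoc h, ← mul_assoc D, hg1]
  have hDP : D * (1 - D * h - h * D) = 0 := by
    simp [mul_sub, h2', hg1]
  have hPD : (1 - D * h - h * D) * D = 0 := by
    simp [sub_mul, mul_assoc, h2, hg1]
  have hPe : (1 - D * h - h * D) * eps a = eps a * (1 - D * h - h * D) := by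
    simp only [sub_mul, mul_sub, one_mul, mul_one, mul_assoc, eps_D hD, eps_h hh, mul_neg]
    simp only [← mul_assoc, eps_D hD, eps_h hh]
    simp [neg_mul]
  set P := 1 - D * h - h * D with hP
  have hone : (1 : Matrix (S × T) (S × T) ℚ) = (1 : Matrix S S ℚ) ⊗ₖ (1 : Matrix T T ℚ) :=
    Matrix.one_kronecker_one.symm
  have e1 : D * (eps a * P) = 0 := by rw [← mul_assoc, eps_D hD, neg_mul, mul_assoc, hDP]; simp
  have e2 : eps a * (eps a * P) = P := by rw [← mul_assoc, eps_sq, one_mul]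
  have e3 : eps a * P * eps a = P := by rw [mul_assoc, hPe, e2]
  have e4 : eps a * P * D = 0 := by rw [mul_assoc, hPD, mul_zero]
  simp only [tD, tH, ← hP, add_mul, mul_add, ← Matrix.mul_kronecker_mul, e1, e2, e3, e4, one_mul,
    mul_one, eps_h hh, neg_kron, Matrix.zero_kronecker, kron_sub]
  have e5 : P ⊗ₖ (1 : Matrix T T ℚ) = 1 - (D * h) ⊗ₖ 1 - (h * D) ⊗ₖ 1 := by
    rw [hP, sub_kron, sub_kron, hone]
  rw [e5]
  abel

theorem tH_up (hD : Up a b D) (hh : Up a b hᵀ) (hh' : Up a' b' h'ᵀ) :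
    Up (fun x : S × T => a x.1 + a' x.2) (fun x : S × T => b x.1 + b' x.2) (tH a D h h')ᵀ := by
  have hP : ∀ s t, (1 - D * h - h * D) s t ≠ 0 → a s = a t ∧ b s = b t := by
    intro s t hst
    by_contra hc
    apply hst
    have h1 : s ≠ t := by rintro rfl; simp at hc
    have h2 : (D * h) s t = 0 := by
      rw [Matrix.mul_apply]
      refine Finset.sum_eq_zero fun x _ => ?_
      by_contra hx
      have q1 := hD _ _ (left_ne_zero_of_mul hx)
      have q2 := hh t x (right_ne_zero_of_mul hx)
      omega
    have h3 : (h * D) s t = 0 := by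
      rw [Matrix.mul_apply]
      refine Finset.sum_eq_zero fun x _ => ?_
      by_contra hx
      have q1 := hD _ _ (right_ne_zero_of_mul hx)
      have q2 := hh x s (left_ne_zero_of_mul hx)
      omega
    simp [h1, h2, h3]
  rintro ⟨s, t⟩ ⟨u, v⟩ hne
  simp only [Matrix.transpose_apply, tH, Matrix.add_apply, Matrix.kronecker_apply, eps,
    Matrix.diagonal_mul] at hne
  by_cases h1 : h u s * (1 : Matrix T T ℚ) v t = 0
  · rw [h1, zero_add] at hne
    have q1 := hP _ _ (right_ne_zero_of_mul (left_ne_zero_of_mul hne))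
    have q2 := hh' t v (right_ne_zero_of_mul hne)
    simp only
    omega
  · have q1 := hh s u (left_ne_zero_of_mul h1)
    have q2 : v = t := by
      by_contra hvt
      exact (right_ne_zero_of_mul h1) (by simp [hvt])
    subst q2
    simp only
    omega

theorem tH_g (hD : Up a b D) (hh : Up a b hᵀ) (hg : D * h * D = D) (h2 : D * D = 0)
    (hg' : D' * h' * D' = D') (h2' : D' * D' = 0) :
    tD a D D' * tH a D h h' * tD a D D' = tD a D D' := by
  have hdd : tD a D D' * tD a D D' = 0 := by
    simp only [tD, add_mul, mul_add, ← Matrix.mul_kronecker_mul, h2, h2', one_mul, mul_one,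
      eps_D hD, neg_kron]
    simp
  have key := tensor_htpy (D' := D') (h' := h') hD hh hg h2
  have hDP : tD a D D' * ((1 - D * h - h * D) ⊗ₖ (1 - D' * h' - h' * D')) = 0 := by
    have p1 : D * (1 - D * h - h * D) = 0 := by
      rw [mul_sub, mul_sub, ← mul_assoc, h2, ← mul_assoc, hg]; simp
    have p2 : D' * (1 - D' * h' - h' * D') = 0 := by
      rw [mul_sub, mul_sub, ← mul_assoc, h2', ← mul_assoc, hg']; simp
    simp only [tD, add_mul, ← Matrix.mul_kronecker_mul, p1, p2]
    simp
  rw [← key, mul_sub, mul_sub, ← mul_assoc, hdd, zero_mul, ← mul_assoc, sub_zero, mul_one,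
    sub_eq_zero] at hDP
  exact hDP.symm

end tensor
end KunnethAux

namespace OGraph
section
variable (G : OGraph)

/-- color of a vertex -/
def cl {G : OGraph} (S : G.EState) (v : G.V) : Prop := S.2 (Quot.mk _ v)

/-- connectivity -/
def conn (s : Finset (Fin G.n)) (u v : G.V) : Prop :=
  Quot.mk (G.rel s) u = Quot.mk (G.rel s) v

theorem conn_refl (s : Finset (Fin G.n)) (u : G.V) : G.conn s u u := rfl

variable {G}

theorem conn.symm' {s : Finset (Fin G.n)} {u v : G.V} (h : G.conn s u v) : G.conn s v u :=
  Eq.symm h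

theorem conn.trans' {s : Finset (Fin G.n)} {u v w : G.V} (h : G.conn s u v)
    (h' : G.conn s v w) : G.conn s u w :=
  Eq.trans h h'

theorem conn.mono {s t : Finset (Fin G.n)} (hst : s ⊆ t) {u v : G.V} (h : G.conn s u v) :
    G.conn t u v := by
  have := congrArg (qmap (r := G.rel s) (r' := G.rel t)
    (fun u v huv => huv.elim fun f hf => ⟨f, hst hf.1, hf.2⟩)) h
  exact this

theorem cl_conn {S : G.EState} {u v : G.V} (h : G.conn S.1 u v) : cl S u ↔ cl S v := by
  unfold cl
  rw [show Quot.mk (G.rel S.1) u = Quot.mk (G.rel S.1) v from h]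

theorem EState_ext {S T : G.EState} (h1 : S.1 = T.1) (h2 : ∀ v, cl S v ↔ cl T v) : S = T := by
  obtain ⟨s, c⟩ := S
  obtain ⟨t, d⟩ := T
  obtain rfl : s = t := h1
  congr 1
  funext k
  induction k using Quot.ind with
  | mk v => exact propext (h2 v)

/-- build a state from a vertex coloring -/
def mkS (s : Finset (Fin G.n)) (c : G.V → Prop) (hc : ∀ u v, G.conn s u v → (c u ↔ c v)) :
    G.EState :=
  ⟨s, Quot.lift c fun u v huv => propext (hc u v (Quot.sound huv))⟩

/-- `T` is the nonzero result of merging `S` along more edges. -/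
def Push (S T : G.EState) : Prop :=
  S.1 ⊆ T.1 ∧ (∀ u v, cl S u → cl S v → G.conn T.1 u v → G.conn S.1 u v) ∧
    ∀ w, cl T w ↔ ∃ u, G.conn T.1 u w ∧ cl S u

/-- single edge step -/
def Step (S : G.EState) (e : Fin G.n) (T : G.EState) : Prop :=
  e ∉ S.1 ∧ T.1 = insert e S.1 ∧ Push S T

theorem Push.trans {S T U : G.EState} (h : Push S T) (h' : Push T U) : Push S U := by
  obtain ⟨a1, a2, a3⟩ := h
  obtain ⟨b1, b2, b3⟩ := h'
  refine ⟨a1.trans b1, ?_, ?_⟩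
  · intro u v hu hv huv
    exact a2 u v hu hv (b2 u v ((a3 u).2 ⟨u, conn_refl _ _ _, hu⟩)
      ((a3 v).2 ⟨v, conn_refl _ _ _, hv⟩) huv)
  · intro w
    rw [b3]
    constructor
    · rintro ⟨u, huw, hu⟩
      obtain ⟨x, hx, hx'⟩ := (a3 u).1 hu
      exact ⟨x, (hx.mono b1).trans' huw, hx'⟩
    · rintro ⟨u, huw, hu⟩
      exact ⟨u, huw, (a3 u).2 ⟨u, conn_refl _ _ _, hu⟩⟩

theorem Push.interp {S U : G.EState} (h : Push S U) (t : Finset (Fin G.n)) (h1 : S.1 ⊆ t)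
    (h2 : t ⊆ U.1) : ∃ T : G.EState, T.1 = t ∧ Push S T ∧ Push T U := by
  obtain ⟨a1, a2, a3⟩ := h
  refine ⟨mkS t (fun w => ∃ u, G.conn t u w ∧ cl S u) ?_, rfl, ⟨h1, ?_, ?_⟩, h2, ?_, ?_⟩
  · intro u v huv
    constructor
    · rintro ⟨x, hx, hx'⟩; exact ⟨x, hx.trans' huv, hx'⟩
    · rintro ⟨x, hx, hx'⟩; exact ⟨x, hx.trans' huv.symm', hx'⟩
  · intro u v hu hv huv
    exact a2 u v hu hv (huv.mono h2)
  · intro w; exact Iff.rfl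
  · rintro u v ⟨x, hx, hx'⟩ ⟨y, hy, hy'⟩ huv
    have : G.conn S.1 x y := a2 x y hx' hy' (((hx.mono h2).trans' huv).trans' (hy.mono h2).symm')
    exact (hx.symm'.trans' (this.mono h1)).trans' hy
  · intro w
    rw [a3]
    constructor
    · rintro ⟨u, huw, hu⟩
      exact ⟨u, huw, u, conn_refl _ _ _, hu⟩
    · rintro ⟨u, huw, x, hx, hx'⟩
      exact ⟨x, (hx.mono h2).trans' huw, hx'⟩

theorem Push.unique {S T T' : G.EState} (h : Push S T) (h' : Push S T') (e : T.1 = T'.1) :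
    T = T' := by
  refine EState_ext e fun v => ?_
  rw [h.2.2, h'.2.2, e]

theorem Push.jdeg {S T : G.EState} (h : Push S T) : G.jdeg T = G.jdeg S := by
  obtain ⟨a1, a2, a3⟩ := h
  unfold OGraph.jdeg
  symm
  let p : G.Comp S.1 → G.Comp T.1 := qmap (r := G.rel S.1) (r' := G.rel T.1)
    (fun u v huv => huv.elim fun f hf => ⟨f, a1 hf.1, hf.2⟩)
  have hp : ∀ k, S.2 k → T.2 (p k) := by
    intro k
    induction k using Quot.ind with
    | mk v => intro hv; exact (a3 v).2 ⟨v, conn_refl _ _ _, hv⟩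
  refine Nat.card_eq_of_bijective (fun k : {k : G.Comp S.1 // S.2 k} =>
    (⟨p k.1, hp k.1 k.2⟩ : {k : G.Comp T.1 // T.2 k})) ⟨?_, ?_⟩
  · rintro ⟨k, hk⟩ ⟨l, hl⟩ hkl
    have hkl' : p k = p l := congrArg Subtype.val hkl
    apply Subtype.ext
    show k = l
    induction k using Quot.ind with
    | mk u =>
      induction l using Quot.ind with
      | mk v => exact a2 u v hk hl hkl'
  · rintro ⟨k, hk⟩
    induction k using Quot.ind with
    | mk w =>
      obtain ⟨u, hu, hu'⟩ := (a3 w).1 hk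
      exact ⟨⟨Quot.mk _ u, hu'⟩, Subtype.ext hu⟩

open Classical in
theorem addEdge_apply (S T : G.EState) (e : Fin G.n) :
    G.addEdge S e T = if Step S e T then 1 else 0 := by
  unfold addEdge
  by_cases he : e ∈ S.1
  · rw [if_pos he, if_neg (fun h => h.1 he)]; rfl
  rw [if_neg he]
  dsimp only
  split_ifs with h1 h2 h2
  · exfalso
    obtain ⟨k1, k2, hne, hp, hk1, hk2⟩ := h1
    obtain ⟨_, h3, a1, a2, a3⟩ := h2
    apply hne
    induction k1 using Quot.ind with
    | mk u =>
      induction k2 using Quot.ind with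
      | mk v =>
        refine a2 u v hk1 hk2 ?_
        rw [h3]; exact hp
  · rfl
  · rw [Finsupp.single_apply, if_pos]
    obtain ⟨_, h3, a1, a2, a3⟩ := h2
    refine EState_ext h3.symm fun w => ?_
    rw [a3, h3]
    constructor
    · rintro ⟨k, hk, hk'⟩
      induction k using Quot.ind with
      | mk u => exact ⟨u, hk, hk'⟩
    · rintro ⟨u, hu, hu'⟩
      exact ⟨Quot.mk _ u, hu, hu'⟩
  · rw [Finsupp.single_apply, if_neg]
    rintro rfl
    apply h2
    refine ⟨he, rfl, Finset.subset_insert _ _, ?_, ?_⟩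
    · intro u v hu hv huv
      by_contra hc
      exact h1 ⟨Quot.mk _ u, Quot.mk _ v, hc, huv, hu, hv⟩
    · intro w
      constructor
      · rintro ⟨k, hk, hk'⟩
        induction k using Quot.ind with
        | mk u => exact ⟨u, hk, hk'⟩
      · rintro ⟨u, hu, hu'⟩
        exact ⟨Quot.mk _ u, hu, hu'⟩

/-- the sign -/
def sg (S : G.EState) (e : Fin G.n) : ℚ := (-1) ^ (S.1.filter fun f => f < e).card

open Classical in
/-- matrix of the differential -/
noncomputable def dmat (G : OGraph) : Matrix G.EState G.EState ℚ :=
  Matrix.of fun T S => ∑ e : Fin G.n, sg S e * (if Step S e T then 1 else 0)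

theorem dmat_apply (S T : G.EState) : G.dmat T S = (G.dState S T : ℚ) := by
  unfold dState dmat
  rw [Finsupp.finsetSum_apply, Int.cast_sum, Matrix.of_apply]
  refine Finset.sum_congr rfl fun e _ => ?_
  rw [Finsupp.smul_apply, addEdge_apply]
  unfold sg
  split_ifs <;> simp

noncomputable instance : Fintype G.EState := by
  classical
  haveI : ∀ s, Finite (G.Comp s) := fun s => by unfold Comp; infer_instance
  exact Fintype.ofFinite _

noncomputable instance : DecidableEq G.EState := Classical.decEq _

/-- number of edges -/
def edeg (S : G.EState) : ℕ := S.1.card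

theorem dmat_up (G : OGraph) : KunnethAux.Up (edeg (G := G)) G.jdeg G.dmat := by
  classical
  intro T S h
  rw [dmat, Matrix.of_apply] at h
  obtain ⟨e, _, he⟩ := Finset.exists_ne_zero_of_sum_ne_zero h
  have : Step S e T := by
    by_contra hc
    apply he
    simp [hc]
  obtain ⟨h1, h2, h3⟩ := this
  refine ⟨?_, h3.jdeg⟩
  unfold edeg
  rw [h2, Finset.card_insert_of_notMem h1]

theorem step_swap {S T U : G.EState} {e f : Fin G.n} (h : Step S e T) (h' : Step T f U) :
    ∃ T', Step S f T' ∧ Step T' e U := by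
  obtain ⟨a1, a2, a3⟩ := h
  obtain ⟨b1, b2, b3⟩ := h'
  rw [a2, Finset.mem_insert, not_or] at b1
  have hU : U.1 = insert f (insert e S.1) := by rw [b2, a2]
  obtain ⟨T', c1, c2, c3⟩ := (a3.trans b3).interp (insert f S.1) (Finset.subset_insert _ _) (by
    rw [hU]; exact Finset.insert_subset_insert _ (Finset.subset_insert _ _))
  refine ⟨T', ⟨b1.2, c1, c2⟩, ?_, ?_, c3⟩
  · rw [c1, Finset.mem_insert, not_or]
    exact ⟨fun h => b1.1 h.symm, a1⟩
  · rw [c1, hU, Finset.insert_comm]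

theorem sg_insert {S T : G.EState} {e : Fin G.n} (h : Step S e T) (f : Fin G.n) :
    sg T f = sg S f * (if e < f then -1 else 1) := by
  unfold sg
  rw [h.2.1, Finset.filter_insert]
  split_ifs
  · rw [Finset.card_insert_of_notMem (by simp [h.1]), pow_succ]
  · simp

open Classical in
theorem sum_steps (S U : G.EState) (e f : Fin G.n) :
    ∑ T : G.EState, (sg T f * (if Step T f U then 1 else 0)) * (sg S e * (if Step S e T then 1 else 0))
    = if ∃ T, Step S e T ∧ Step T f U then sg S e * sg S f * (if e < f then -1 else 1) else 0 := by
  split_ifs with h hlt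
  all_goals try
    obtain ⟨T, h1, h2⟩ := h
    rw [Finset.sum_eq_single T]
    · rw [if_pos h1, if_pos h2, sg_insert h1]
      simp [hlt]
      try ring
    · intro T' _ hne
      rw [if_neg (fun h3 : Step S e T' => hne (h3.2.2.unique h1.2.2 (h3.2.1.trans h1.2.1.symm)))]
      simp
    · simp
  refine Finset.sum_eq_zero fun T _ => ?_
  by_cases h1 : Step S e T
  · by_cases h2 : Step T f U
    · exact absurd ⟨T, h1, h2⟩ h
    · simp [h2]
  · simp [h1]

theorem dmat_sq (G : OGraph) : G.dmat * G.dmat = 0 := by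
  classical
  ext U S
  have h0 : (G.dmat * G.dmat) U S = ∑ e : Fin G.n, ∑ f : Fin G.n,
      if ∃ T, Step S e T ∧ Step T f U then sg S e * sg S f * (if e < f then -1 else 1) else 0 := by
    rw [Matrix.mul_apply]
    simp only [dmat, Matrix.of_apply, Finset.sum_mul_sum]
    simp only [← sum_steps]
    rw [Finset.sum_comm]
    conv_rhs => rw [Finset.sum_comm]
    refine Finset.sum_congr rfl fun f _ => ?_
    rw [Finset.sum_comm]
  have h1 : (G.dmat * G.dmat) U S = - (G.dmat * G.dmat) U S := by
    conv_lhs => rw [h0, Finset.sum_comm]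
    rw [h0, ← Finset.sum_neg_distrib]
    refine Finset.sum_congr rfl fun e _ => ?_
    rw [← Finset.sum_neg_distrib]
    refine Finset.sum_congr rfl fun f _ => ?_
    by_cases h : ∃ T, Step S e T ∧ Step T f U
    · have h' : ∃ T, Step S f T ∧ Step T e U := by
        obtain ⟨T, a, b⟩ := h; exact step_swap a b
      rw [if_pos h, if_pos h']
      obtain ⟨T, a, b⟩ := h
      have hne : e ≠ f := by
        rintro rfl
        exact b.1 (by rw [a.2.1]; exact Finset.mem_insert_self _ _)
      rcases lt_or_gt_of_ne hne with hl | hl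
      · rw [if_pos hl, if_neg (not_lt.2 hl.le)]; ring
      · rw [if_pos hl, if_neg (not_lt.2 hl.le)]; ring
    · have h' : ¬ ∃ T, Step S f T ∧ Step T e U := by
        rintro ⟨T, a, b⟩; exact h (step_swap a b)
      rw [if_neg h, if_neg h']; simp
  simp only [Matrix.zero_apply]
  linarith

end
end OGraph

namespace OGraph
section
variable {G : OGraph}
open KunnethAux

theorem rn {M N : Type*} [AddCommGroup M] [AddCommGroup N] [Module.Finite ℤ M]
    (f : M →ₗ[ℤ] N) :
    Module.finrank ℤ (LinearMap.range f) + Module.finrank ℤ (LinearMap.ker f)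
      = Module.finrank ℤ M := by
  rw [← f.quotKerEquivRange.finrank_eq]
  exact Submodule.finrank_quotient_add_finrank _

theorem diff_single (S : G.EState) : G.diff (Finsupp.single S 1) = G.dState S := by
  simp [diff]

theorem Cmod_span (i j : ℕ) : G.Cmod i j = Submodule.span ℤ
    ((fun S => Finsupp.single S (1 : ℤ)) '' {S : G.EState | S.1.card = i ∧ G.jdeg S = j}) :=
  Finsupp.supported_eq_span_single _ _

theorem map_Cmod (i j : ℕ) : (G.Cmod i j).map G.diff = Submodule.span ℤ
    (G.dState '' {S : G.EState | S.1.card = i ∧ G.jdeg S = j}) := by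
  rw [Cmod_span, Submodule.map_span, Set.image_image]
  simp only [diff_single]

theorem finrank_span_rat {ι : Type*} [Finite ι] (s : Set (ι →₀ ℤ)) :
    Module.finrank ℤ (Submodule.span ℤ s) = Module.finrank ℚ (Submodule.span ℚ
      ((Finsupp.mapRange.linearMap (α := ι) (Algebra.linearMap ℤ ℚ)) '' s)) := by
  rw [← Submodule.localized'_span ℚ (nonZeroDivisors ℤ)]
  rw [IsLocalization.finrank_eq ℚ (nonZeroDivisors ℤ) le_rfl]
  exact (IsLocalizedModule.finrank_eq (nonZeroDivisors ℤ) (Submodule.toLocalized' ℚ (nonZeroDivisors ℤ)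
    (Finsupp.mapRange.linearMap (α := ι) (Algebra.linearMap ℤ ℚ)) (Submodule.span ℤ s)) le_rfl).symm

theorem finrank_map_Cmod (i j : ℕ) :
    Module.finrank ℤ ((G.Cmod i j).map G.diff) = (G.dmat * E edeg G.jdeg i j).rank := by
  rw [map_Cmod, finrank_span_rat, Matrix.rank_eq_finrank_span_cols,
    ← LinearEquiv.finrank_map_eq (Finsupp.linearEquivFunOnFinite ℚ ℚ G.EState), Submodule.map_span]
  have : ∀ X Y : Submodule ℚ (G.EState → ℚ), X = Y → Module.finrank ℚ X = Module.finrank ℚ Y := by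
    rintro X _ rfl; rfl
  apply this
  have hcol : ∀ S : G.EState, S.1.card = i ∧ G.jdeg S = j →
      (G.dmat * E edeg G.jdeg i j).col S = (Finsupp.linearEquivFunOnFinite ℚ ℚ G.EState)
        (Finsupp.mapRange.linearMap (Algebra.linearMap ℤ ℚ) (G.dState S)) := by
    intro S hS
    ext T
    have h1 : edeg S = i ∧ G.jdeg S = j := hS
    simp [Matrix.col_apply, E, Matrix.mul_diagonal, h1, dmat_apply]
  apply le_antisymm
  · rw [Submodule.span_le]
    rintro _ ⟨_, ⟨_, ⟨S, hS, rfl⟩, rfl⟩, rfl⟩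
    apply Submodule.subset_span
    exact ⟨S, hcol S hS⟩
  · rw [Submodule.span_le]
    rintro _ ⟨S, rfl⟩
    by_cases hS : S.1.card = i ∧ G.jdeg S = j
    · apply Submodule.subset_span
      exact ⟨_, ⟨_, ⟨S, hS, rfl⟩, rfl⟩, (hcol S hS).symm⟩
    · have : (G.dmat * E edeg G.jdeg i j).col S = 0 := by
        have h1 : ¬ (edeg S = i ∧ G.jdeg S = j) := hS
        ext T
        simp only [Matrix.col_apply, E, Matrix.mul_diagonal, if_neg h1]
        simp
      rw [this]
      exact Submodule.zero_mem _

theorem diff_diff (x : G.EState →₀ ℤ) : G.diff (G.diff x) = 0 := by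
  have : G.diff ∘ₗ G.diff = 0 := by
    ext S T
    simp only [LinearMap.comp_apply, Finsupp.lsingle_apply, diff_single, LinearMap.zero_apply,
      Finsupp.zero_apply]
    have h1 : G.diff (G.dState S) = ∑ U : G.EState, G.dState S U • G.dState U := by
      unfold diff
      rw [Finsupp.lsum_apply, Finsupp.sum_fintype _ _ (by simp)]
      simp
    rw [h1, Finsupp.finsetSum_apply]
    have h2 := congrFun (congrFun (dmat_sq G) T) S
    rw [Matrix.mul_apply] at h2
    simp only [dmat_apply, Matrix.zero_apply] at h2
    have h3 : ∑ U : G.EState, G.dState U T * G.dState S U = 0 := by exact_mod_cast h2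
    rw [← h3]
    refine Finset.sum_congr rfl fun U _ => ?_
    rw [Finsupp.smul_apply, smul_eq_mul, mul_comm]
  exact LinearMap.congr_fun this x

theorem Bmod_le (i j : ℕ) : G.Bmod i j ≤ G.Zmod i j := by
  cases i with
  | zero => exact bot_le
  | succ i =>
    refine le_inf ?_ ?_
    · rintro _ ⟨x, _, rfl⟩
      exact diff_diff x
    · show (G.Cmod i j).map G.diff ≤ _
      rw [map_Cmod, Submodule.span_le]
      rintro _ ⟨S, hS, rfl⟩
      rw [SetLike.mem_coe, Cmod, Finsupp.mem_supported]
      intro T hT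
      have h1 : G.dState S T ≠ 0 := by simpa using hT
      have h2 := dmat_up G T S (by rw [dmat_apply]; exact_mod_cast h1)
      have hS' : edeg S = i ∧ G.jdeg S = j := hS
      show edeg T = i + 1 ∧ G.jdeg T = j
      omega

theorem finrank_H (i j : ℕ) : Module.finrank ℤ (G.Hmod i j) + Module.finrank ℤ (G.Bmod i j)
    = Module.finrank ℤ (G.Zmod i j) := by
  let f : (G.Zmod i j) →+ G.Hmod i j := QuotientAddGroup.mk'
    (AddSubgroup.comap (G.Zmod i j).toAddSubgroup.subtype (G.Bmod i j).toAddSubgroup)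
  have hs : Function.Surjective f := QuotientAddGroup.mk'_surjective _
  have hk : LinearMap.ker f.toIntLinearMap = (G.Bmod i j).comap (G.Zmod i j).subtype := by
    ext x
    rw [LinearMap.mem_ker]
    exact QuotientAddGroup.eq_zero_iff (N := AddSubgroup.comap (G.Zmod i j).toAddSubgroup.subtype (G.Bmod i j).toAddSubgroup) x
  have h1 := rn f.toIntLinearMap
  rw [LinearMap.range_eq_top.2 hs, finrank_top, hk] at h1
  rw [← h1, (Submodule.comapSubtypeEquivOfLe (Bmod_le (G := G) i j)).finrank_eq]

theorem finrank_Z (i j : ℕ) : Module.finrank ℤ ((G.Cmod i j).map G.diff)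
    + Module.finrank ℤ (G.Zmod i j) = Module.finrank ℤ (G.Cmod i j) := by
  rw [← rn (G.diff.domRestrict (G.Cmod i j)), LinearMap.range_domRestrict, LinearMap.ker_domRestrict]
  congr 1
  rw [← Submodule.finrank_map_subtype_eq, Submodule.map_comap_subtype, inf_comm]
  rfl

theorem finrank_C (i j : ℕ) : (Module.finrank ℤ (G.Cmod i j) : ℚ)
    = (E (edeg (G := G)) G.jdeg i j).trace := by
  classical
  unfold Cmod
  rw [(Finsupp.supportedEquivFinsupp (R := ℤ) (M := ℤ) {S : G.EState | S.1.card = i ∧ G.jdeg S = j}).finrank_eq]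
  rw [Module.finrank_finsupp_self, E, Matrix.trace_diagonal, Finset.sum_boole, Fintype.card_subtype]
  rfl

theorem finrank_Hmod {h : Matrix G.EState G.EState ℚ} (hh : Up edeg G.jdeg h.transpose)
    (hg : G.dmat * h * G.dmat = G.dmat) (i j : ℕ) :
    (Module.finrank ℤ (G.Hmod i j) : ℚ) =
      ((1 - G.dmat * h - h * G.dmat) * E edeg G.jdeg i j).trace := by
  have h1 : (Module.finrank ℤ (G.Bmod i j) : ℚ) = (G.dmat * h * E edeg G.jdeg i j).trace := by
    cases i with
    | zero =>
      rw [mul_assoc, hh.comm0]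
      simp only [Bmod, mul_zero, Matrix.trace_zero, Nat.cast_eq_zero]
      exact finrank_bot ℤ _
    | succ i =>
      rw [← rank_eq_trace' (dmat_up G) hh hg, ← finrank_map_Cmod]
      rfl
  have h2 := rank_eq_trace (dmat_up G) hh hg i j
  have h3 := finrank_C (G := G) i j
  rw [sub_mul, sub_mul, Matrix.trace_sub, Matrix.trace_sub, one_mul, ← h1, ← h2, ← h3,
    ← finrank_map_Cmod, ← finrank_Z, ← finrank_H]
  push_cast
  ring

end
end OGraph

namespace OGraph
section
open KunnethAux
variable {G₁ G₂ : OGraph}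

/-- left edges -/
def eL (a : Fin G₁.n) : Fin (disj G₁ G₂).n := Fin.castAdd G₂.n a
/-- right edges -/
def eR (a : Fin G₂.n) : Fin (disj G₁ G₂).n := Fin.natAdd G₁.n a
/-- left vertices -/
def vL (a : G₁.V) : (disj G₁ G₂).V := Sum.inl a
/-- right vertices -/
def vR (a : G₂.V) : (disj G₁ G₂).V := Sum.inr a

theorem ends_eL (a : Fin G₁.n) : (disj G₁ G₂).ends (eL a) = (G₁.ends a).map vL := by
  show ((finSumFinEquiv.symm (Fin.castAdd G₂.n a)).elim _ _ : Sym2 (G₁.V ⊕ G₂.V)) = _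
  rw [finSumFinEquiv_symm_apply_castAdd]
  rfl

theorem ends_eR (a : Fin G₂.n) : (disj G₁ G₂).ends (eR a) = (G₂.ends a).map vR := by
  show ((finSumFinEquiv.symm (Fin.natAdd G₁.n a)).elim _ _ : Sym2 (G₁.V ⊕ G₂.V)) = _
  rw [finSumFinEquiv_symm_apply_natAdd]
  rfl

theorem e_cases (e : Fin (disj G₁ G₂).n) : (∃ a, e = eL a) ∨ (∃ a, e = eR a) :=
  Fin.addCases (motive := fun e : Fin (G₁.n + G₂.n) =>
    (∃ a : Fin G₁.n, e = Fin.castAdd G₂.n a) ∨ (∃ a, e = Fin.natAdd G₁.n a))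
    (fun a => Or.inl ⟨a, rfl⟩) (fun a => Or.inr ⟨a, rfl⟩) e

theorem v_cases (v : (disj G₁ G₂).V) : (∃ a, v = vL a) ∨ (∃ a, v = vR a) := by
  rcases (v : G₁.V ⊕ G₂.V) with a | a
  · exact Or.inl ⟨a, rfl⟩
  · exact Or.inr ⟨a, rfl⟩

theorem eL_inj {a b : Fin G₁.n} : (eL a : Fin (disj G₁ G₂).n) = eL b ↔ a = b :=
  (Fin.castAdd_injective G₁.n G₂.n).eq_iff

theorem eR_inj {a b : Fin G₂.n} : (eR a : Fin (disj G₁ G₂).n) = eR b ↔ a = b :=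
  (Fin.natAdd_injective G₂.n G₁.n).eq_iff

theorem eL_lt_eR (a : Fin G₁.n) (b : Fin G₂.n) : (eL a : Fin (disj G₁ G₂).n) < eR b := by
  show (a : ℕ) < G₁.n + (b : ℕ)
  omega

theorem eL_lt {a b : Fin G₁.n} : (eL a : Fin (disj G₁ G₂).n) < eL b ↔ a < b := Iff.rfl

theorem eR_lt {a b : Fin G₂.n} : (eR a : Fin (disj G₁ G₂).n) < eR b ↔ a < b := by
  show G₁.n + (a : ℕ) < G₁.n + (b : ℕ) ↔ (a : ℕ) < b
  omega

theorem sum_e (f : Fin (disj G₁ G₂).n → ℚ) : ∑ e, f e = ∑ a, f (eL a) + ∑ a, f (eR a) :=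
  Fin.sum_univ_add (a := G₁.n) (b := G₂.n) f

/-- union of edge sets -/
def us (s : Finset (Fin G₁.n)) (t : Finset (Fin G₂.n)) : Finset (Fin (disj G₁ G₂).n) :=
  (s.disjSum t).map (finSumFinEquiv (m := G₁.n) (n := G₂.n)).toEmbedding

theorem us_card (s : Finset (Fin G₁.n)) (t : Finset (Fin G₂.n)) :
    (us s t : Finset (Fin (disj G₁ G₂).n)).card = s.card + t.card := by
  have : (us s t : Finset (Fin (disj G₁ G₂).n)).card = (s.disjSum t).card := Finset.card_map _
  rw [this, Finset.card_disjSum]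

theorem mem_us (s : Finset (Fin G₁.n)) (t : Finset (Fin G₂.n)) (x : Fin G₁.n ⊕ Fin G₂.n) :
    (finSumFinEquiv x : Fin (disj G₁ G₂).n) ∈ us s t ↔ x ∈ s.disjSum t :=
  Finset.mem_map' (finSumFinEquiv (m := G₁.n) (n := G₂.n)).toEmbedding

theorem eL_mem {s : Finset (Fin G₁.n)} {t : Finset (Fin G₂.n)} {a : Fin G₁.n} :
    eL a ∈ (us s t : Finset (Fin (disj G₁ G₂).n)) ↔ a ∈ s := by
  have := mem_us s t (Sum.inl a)
  rw [Finset.inl_mem_disjSum] at this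
  exact this

theorem eR_mem {s : Finset (Fin G₁.n)} {t : Finset (Fin G₂.n)} {a : Fin G₂.n} :
    eR a ∈ (us s t : Finset (Fin (disj G₁ G₂).n)) ↔ a ∈ t := by
  have := mem_us s t (Sum.inr a)
  rw [Finset.inr_mem_disjSum] at this
  exact this

theorem us_ext {A B : Finset (Fin (disj G₁ G₂).n)} (h1 : ∀ a, eL a ∈ A ↔ eL a ∈ B)
    (h2 : ∀ a, eR a ∈ A ↔ eR a ∈ B) : A = B := by
  ext e
  rcases e_cases e with ⟨a, rfl⟩ | ⟨a, rfl⟩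
  · exact h1 a
  · exact h2 a

theorem us_inj {s s' : Finset (Fin G₁.n)} {t t' : Finset (Fin G₂.n)} :
    (us s t : Finset (Fin (disj G₁ G₂).n)) = us s' t' ↔ s = s' ∧ t = t' := by
  constructor
  · intro h
    constructor
    · ext a
      rw [← eL_mem (t := t), h, eL_mem]
    · ext a
      rw [← eR_mem (s := s), h, eR_mem]
  · rintro ⟨rfl, rfl⟩; rfl

theorem us_subset {s s' : Finset (Fin G₁.n)} {t t' : Finset (Fin G₂.n)} :
    (us s t : Finset (Fin (disj G₁ G₂).n)) ⊆ us s' t' ↔ s ⊆ s' ∧ t ⊆ t' := by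
  constructor
  · intro h
    exact ⟨fun a ha => eL_mem.1 (h (eL_mem.2 ha)), fun a ha => eR_mem.1 (h (eR_mem.2 ha))⟩
  · rintro ⟨h1, h2⟩ e he
    rcases e_cases e with ⟨a, rfl⟩ | ⟨a, rfl⟩
    · exact eL_mem.2 (h1 (eL_mem.1 he))
    · exact eR_mem.2 (h2 (eR_mem.1 he))

theorem eL_ne_eR (a : Fin G₁.n) (b : Fin G₂.n) : (eL a : Fin (disj G₁ G₂).n) ≠ eR b :=
  (eL_lt_eR a b).ne

theorem us_insert_L (e : Fin G₁.n) (s : Finset (Fin G₁.n)) (t : Finset (Fin G₂.n)) :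
    (us (insert e s) t : Finset (Fin (disj G₁ G₂).n)) = insert (eL e) (us s t) := by
  refine us_ext (fun a => ?_) (fun a => ?_)
  · simp [eL_mem, eL_inj]
  · simp [eR_mem, (eL_ne_eR _ _).symm]

theorem us_insert_R (e : Fin G₂.n) (s : Finset (Fin G₁.n)) (t : Finset (Fin G₂.n)) :
    (us s (insert e t) : Finset (Fin (disj G₁ G₂).n)) = insert (eR e) (us s t) := by
  refine us_ext (fun a => ?_) (fun a => ?_)
  · simp [eL_mem, eL_ne_eR]
  · simp [eR_mem, eR_inj]

theorem us_filter_L (e : Fin G₁.n) (s : Finset (Fin G₁.n)) (t : Finset (Fin G₂.n)) :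
    (us s t : Finset (Fin (disj G₁ G₂).n)).filter (fun f => f < eL e)
      = us (s.filter fun f => f < e) ∅ := by
  refine us_ext (fun a => ?_) (fun a => ?_)
  · simp [eL_mem, eL_lt]
  · simp [eR_mem, (eL_lt_eR e a).le]

theorem us_filter_R (e : Fin G₂.n) (s : Finset (Fin G₁.n)) (t : Finset (Fin G₂.n)) :
    (us s t : Finset (Fin (disj G₁ G₂).n)).filter (fun f => f < eR e)
      = us s (t.filter fun f => f < e) := by
  refine us_ext (fun a => ?_) (fun a => ?_)
  · simp [eL_mem, eL_lt_eR]
  · simp [eR_mem, eR_lt]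

theorem us_surj (A : Finset (Fin (disj G₁ G₂).n)) : ∃ s t, A = us s t := by
  refine ⟨Finset.univ.filter fun a => eL a ∈ A, Finset.univ.filter fun a => eR a ∈ A, ?_⟩
  refine us_ext (fun a => ?_) (fun a => ?_)
  · simp [eL_mem]
  · simp [eR_mem]

theorem rel_us {s : Finset (Fin G₁.n)} {t : Finset (Fin G₂.n)} {x y : (disj G₁ G₂).V}
    (h : (disj G₁ G₂).rel (us s t) x y) :
    (∃ u v, x = vL u ∧ y = vL v ∧ G₁.rel s u v) ∨ (∃ u v, x = vR u ∧ y = vR v ∧ G₂.rel t u v) := by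
  obtain ⟨e, he, hxy⟩ := h
  rcases e_cases e with ⟨a, rfl⟩ | ⟨a, rfl⟩
  · left
    rw [ends_eL] at hxy
    rw [eL_mem] at he
    generalize hz : G₁.ends a = z at hxy
    induction z using Sym2.ind with
    | _ p q =>
      rw [Sym2.map_mk, Sym2.eq_iff] at hxy
      rcases hxy with ⟨rfl, rfl⟩ | ⟨rfl, rfl⟩
      · exact ⟨p, q, rfl, rfl, a, he, hz⟩
      · exact ⟨q, p, rfl, rfl, a, he, by rw [hz, Sym2.eq_swap]⟩
  · right
    rw [ends_eR] at hxy
    rw [eR_mem] at he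
    generalize hz : G₂.ends a = z at hxy
    induction z using Sym2.ind with
    | _ p q =>
      rw [Sym2.map_mk, Sym2.eq_iff] at hxy
      rcases hxy with ⟨rfl, rfl⟩ | ⟨rfl, rfl⟩
      · exact ⟨p, q, rfl, rfl, a, he, hz⟩
      · exact ⟨q, p, rfl, rfl, a, he, by rw [hz, Sym2.eq_swap]⟩

/-- components of disjoint union -/
def toSum (s : Finset (Fin G₁.n)) (t : Finset (Fin G₂.n)) :
    (disj G₁ G₂).Comp (us s t) → G₁.Comp s ⊕ G₂.Comp t :=
  Quot.lift (fun v : G₁.V ⊕ G₂.V => Sum.map (Quot.mk (G₁.rel s)) (Quot.mk (G₂.rel t)) v) (by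
    intro x y h
    rcases rel_us h with ⟨u, v, rfl, rfl, h3⟩ | ⟨u, v, rfl, rfl, h3⟩
    · exact congrArg Sum.inl (Quot.sound h3)
    · exact congrArg Sum.inr (Quot.sound h3))

/-- left inclusion on components -/
def cL (s : Finset (Fin G₁.n)) (t : Finset (Fin G₂.n)) :
    G₁.Comp s → (disj G₁ G₂).Comp (us s t) :=
  Quot.lift (fun v => Quot.mk _ (vL v)) (by
    rintro x y ⟨e, he, hxy⟩
    refine Quot.sound ⟨eL e, eL_mem.2 he, ?_⟩
    rw [ends_eL, hxy, Sym2.map_mk])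

/-- right inclusion on components -/
def cR (s : Finset (Fin G₁.n)) (t : Finset (Fin G₂.n)) :
    G₂.Comp t → (disj G₁ G₂).Comp (us s t) :=
  Quot.lift (fun v => Quot.mk _ (vR v)) (by
    rintro x y ⟨e, he, hxy⟩
    refine Quot.sound ⟨eR e, eR_mem.2 he, ?_⟩
    rw [ends_eR, hxy, Sym2.map_mk])

theorem toSum_cL (s : Finset (Fin G₁.n)) (t : Finset (Fin G₂.n)) (k : G₁.Comp s) :
    toSum s t (cL s t k) = Sum.inl k := by
  induction k using Quot.ind with
  | mk v => rfl

theorem toSum_cR (s : Finset (Fin G₁.n)) (t : Finset (Fin G₂.n)) (k : G₂.Comp t) :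
    toSum s t (cR s t k) = Sum.inr k := by
  induction k using Quot.ind with
  | mk v => rfl

theorem c_cases {s : Finset (Fin G₁.n)} {t : Finset (Fin G₂.n)}
    (k : (disj G₁ G₂).Comp (us s t)) : (∃ a, k = cL s t a) ∨ (∃ a, k = cR s t a) := by
  induction k using Quot.ind with
  | mk v =>
    rcases v_cases v with ⟨a, rfl⟩ | ⟨a, rfl⟩
    · exact Or.inl ⟨Quot.mk _ a, rfl⟩
    · exact Or.inr ⟨Quot.mk _ a, rfl⟩

theorem conn_LL {s : Finset (Fin G₁.n)} {t : Finset (Fin G₂.n)} {u v : G₁.V} :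
    (disj G₁ G₂).conn (us s t) (vL u) (vL v) ↔ G₁.conn s u v :=
  ⟨fun h => Sum.inl_injective (congrArg (toSum s t) h), fun h => congrArg (cL s t) h⟩

theorem conn_RR {s : Finset (Fin G₁.n)} {t : Finset (Fin G₂.n)} {u v : G₂.V} :
    (disj G₁ G₂).conn (us s t) (vR u) (vR v) ↔ G₂.conn t u v :=
  ⟨fun h => Sum.inr_injective (congrArg (toSum s t) h), fun h => congrArg (cR s t) h⟩

theorem conn_LR {s : Finset (Fin G₁.n)} {t : Finset (Fin G₂.n)} {u : G₁.V} {v : G₂.V} :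
    ¬ (disj G₁ G₂).conn (us s t) (vL u) (vR v) :=
  fun h => Sum.inl_ne_inr (congrArg (toSum s t) h)

theorem conn_RL {s : Finset (Fin G₁.n)} {t : Finset (Fin G₂.n)} {u : G₁.V} {v : G₂.V} :
    ¬ (disj G₁ G₂).conn (us s t) (vR v) (vL u) :=
  fun h => Sum.inl_ne_inr (congrArg (toSum s t) h).symm

/-- the state of the disjoint union -/
noncomputable def Phi (S : G₁.EState) (T : G₂.EState) : (disj G₁ G₂).EState :=
  mkS (us S.1 T.1) (fun v : G₁.V ⊕ G₂.V => Sum.elim (cl S) (cl T) v) (by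
    intro x y h
    rcases v_cases x with ⟨a, rfl⟩ | ⟨a, rfl⟩ <;> rcases v_cases y with ⟨b, rfl⟩ | ⟨b, rfl⟩
    · exact cl_conn (conn_LL.1 h)
    · exact absurd h conn_LR
    · exact absurd h conn_RL
    · exact cl_conn (conn_RR.1 h))

theorem Phi_fst (S : G₁.EState) (T : G₂.EState) : (Phi S T).1 = us S.1 T.1 := rfl
theorem cl_Phi_L (S : G₁.EState) (T : G₂.EState) (u : G₁.V) : cl (Phi S T) (vL u) ↔ cl S u := Iff.rfl
theorem cl_Phi_R (S : G₁.EState) (T : G₂.EState) (u : G₂.V) : cl (Phi S T) (vR u) ↔ cl T u := Iff.rfl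

theorem Phi_inj {S S' : G₁.EState} {T T' : G₂.EState} (h : Phi S T = Phi S' T') :
    S = S' ∧ T = T' := by
  have h1 : us S.1 T.1 = us S'.1 T'.1 := congrArg Sigma.fst h
  rw [us_inj] at h1
  refine ⟨EState_ext h1.1 fun v => ?_, EState_ext h1.2 fun v => ?_⟩
  · rw [← cl_Phi_L S T, h, cl_Phi_L]
  · rw [← cl_Phi_R S T, h, cl_Phi_R]

theorem Phi_surj (U : (disj G₁ G₂).EState) : ∃ S T, Phi S T = U := by
  obtain ⟨A, c⟩ := U
  obtain ⟨s, t, rfl⟩ := us_surj A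
  refine ⟨⟨s, fun k => c (cL s t k)⟩, ⟨t, fun k => c (cR s t k)⟩, EState_ext rfl fun v => ?_⟩
  rcases v_cases v with ⟨a, rfl⟩ | ⟨a, rfl⟩
  · exact Iff.rfl
  · exact Iff.rfl

theorem Phi_jdeg (S : G₁.EState) (T : G₂.EState) :
    (disj G₁ G₂).jdeg (Phi S T) = G₁.jdeg S + G₂.jdeg T := by
  have hL : ∀ k, (Phi S T).2 (cL S.1 T.1 k) ↔ S.2 k := fun k => by
    induction k using Quot.ind with
    | mk v => exact Iff.rfl
  have hR : ∀ k, (Phi S T).2 (cR S.1 T.1 k) ↔ T.2 k := fun k => by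
    induction k using Quot.ind with
    | mk v => exact Iff.rfl
  haveI : Finite (G₁.Comp S.1) := by unfold Comp; infer_instance
  haveI : Finite (G₂.Comp T.1) := by unfold Comp; infer_instance
  unfold jdeg
  rw [← Nat.card_sum]
  symm
  refine Nat.card_eq_of_bijective (fun k : {k // S.2 k} ⊕ {k // T.2 k} =>
    (Sum.elim (fun k => ⟨cL S.1 T.1 k.1, (hL k.1).2 k.2⟩) (fun k => ⟨cR S.1 T.1 k.1, (hR k.1).2 k.2⟩) k :
      {k : (disj G₁ G₂).Comp (Phi S T).1 // (Phi S T).2 k})) ⟨?_, ?_⟩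
  · intro x y h
    have h' := congrArg (fun k => toSum S.1 T.1 k.1) h
    rcases x with ⟨x, hx⟩ | ⟨x, hx⟩ <;> rcases y with ⟨y, hy⟩ | ⟨y, hy⟩ <;>
      simp only [Sum.elim_inl, Sum.elim_inr] at h'
    · erw [toSum_cL, toSum_cL] at h'
      obtain rfl := Sum.inl_injective h'
      rfl
    · erw [toSum_cL, toSum_cR] at h'
      exact absurd h' Sum.inl_ne_inr
    · erw [toSum_cL, toSum_cR] at h'
      exact absurd h' Sum.inr_ne_inl
    · erw [toSum_cR, toSum_cR] at h'
      obtain rfl := Sum.inr_injective h'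
      rfl
  · rintro ⟨k, hk⟩
    rcases c_cases (s := S.1) (t := T.1) k with ⟨a, rfl⟩ | ⟨a, rfl⟩
    · exact ⟨Sum.inl ⟨a, (hL a).1 hk⟩, rfl⟩
    · exact ⟨Sum.inr ⟨a, (hR a).1 hk⟩, rfl⟩

theorem Phi_edeg (S : G₁.EState) (T : G₂.EState) :
    edeg (Phi S T) = edeg S + edeg T := us_card _ _

theorem v_forall {p : (disj G₁ G₂).V → Prop} : (∀ v, p v) ↔ (∀ a, p (vL a)) ∧ ∀ a, p (vR a) := by
  constructor
  · exact fun h => ⟨fun a => h _, fun a => h _⟩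
  · rintro ⟨h1, h2⟩ v
    rcases v_cases v with ⟨a, rfl⟩ | ⟨a, rfl⟩
    · exact h1 a
    · exact h2 a

theorem v_exists {p : (disj G₁ G₂).V → Prop} : (∃ v, p v) ↔ (∃ a, p (vL a)) ∨ ∃ a, p (vR a) := by
  constructor
  · rintro ⟨v, hv⟩
    rcases v_cases v with ⟨a, rfl⟩ | ⟨a, rfl⟩
    · exact Or.inl ⟨a, hv⟩
    · exact Or.inr ⟨a, hv⟩
  · rintro (⟨a, h⟩ | ⟨a, h⟩) <;> exact ⟨_, h⟩

theorem Push_Phi {S S' : G₁.EState} {T T' : G₂.EState} :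
    Push (Phi S T) (Phi S' T') ↔ Push S S' ∧ Push T T' := by
  unfold Push
  simp only [Phi_fst, us_subset, v_forall, v_exists, cl_Phi_L, cl_Phi_R, conn_LL, conn_RR,
    conn_LR, conn_RL]
  simp only [false_and, exists_false, or_false, false_or, false_imp_iff, implies_true, and_true,
    true_and, imp_true_iff]
  tauto

theorem Push_same {G : OGraph} {S T : G.EState} : S.1 = T.1 ∧ Push S T ↔ S = T := by
  have hr : ∀ S : G.EState, Push S S := fun S =>
    ⟨subset_rfl, fun _ _ _ _ h => h, fun w => ⟨fun h => ⟨w, conn_refl _ _ _, h⟩,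
      fun ⟨u, hu, h⟩ => (cl_conn hu).1 h⟩⟩
  constructor
  · rintro ⟨h1, h2⟩
    exact (hr S).unique h2 h1
  · rintro rfl
    exact ⟨rfl, hr S⟩

theorem Step_L {S S' : G₁.EState} {T T' : G₂.EState} {e : Fin G₁.n} :
    Step (Phi S T) (eL e) (Phi S' T') ↔ Step S e S' ∧ T = T' := by
  rw [← Push_same]
  unfold Step
  rw [Push_Phi, Phi_fst, Phi_fst, ← us_insert_L, us_inj, eL_mem, eq_comm (a := T.1)]
  tauto

theorem Step_R {S S' : G₁.EState} {T T' : G₂.EState} {e : Fin G₂.n} :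
    Step (Phi S T) (eR e) (Phi S' T') ↔ S = S' ∧ Step T e T' := by
  rw [← Push_same]
  unfold Step
  rw [Push_Phi, Phi_fst, Phi_fst, ← us_insert_R, us_inj, eR_mem, eq_comm (a := S.1)]
  tauto

theorem sg_L (S : G₁.EState) (T : G₂.EState) (e : Fin G₁.n) : sg (Phi S T) (eL e) = sg S e := by
  unfold sg
  rw [Phi_fst, us_filter_L, us_card, Finset.card_empty, add_zero]

theorem sg_R (S : G₁.EState) (T : G₂.EState) (e : Fin G₂.n) :
    sg (Phi S T) (eR e) = (-1) ^ edeg S * sg T e := by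
  unfold sg
  rw [Phi_fst, us_filter_R, us_card, pow_add]
  rfl

theorem dmat_Phi (S S' : G₁.EState) (T T' : G₂.EState) :
    (disj G₁ G₂).dmat (Phi S' T') (Phi S T) = tD edeg G₁.dmat G₂.dmat (S', T') (S, T) := by
  classical
  simp only [tD, Matrix.add_apply, Matrix.kronecker_apply]
  simp only [dmat, Matrix.of_apply]
  rw [sum_e]
  congr 1
  · rw [Finset.sum_mul]
    refine Finset.sum_congr rfl fun e _ => ?_
    rw [sg_L, mul_assoc]
    congr 1
    simp only [Step_L, Matrix.one_apply, eq_comm (a := T')]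
    split_ifs <;> simp_all
  · rw [Finset.mul_sum]
    refine Finset.sum_congr rfl fun e _ => ?_
    rw [sg_R]
    simp only [Step_R, eps, Matrix.diagonal_apply, eq_comm (a := S')]
    by_cases h : S = S'
    · subst h
      simp [mul_assoc]
    · simp [h]

/-- the bijection of states -/
noncomputable def phi (G₁ G₂ : OGraph) : G₁.EState × G₂.EState ≃ (disj G₁ G₂).EState :=
  Equiv.ofBijective (fun x => Phi x.1 x.2) ⟨by
    rintro ⟨S, T⟩ ⟨S', T'⟩ h
    obtain ⟨rfl, rfl⟩ := Phi_inj h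
    rfl, by
    intro U
    obtain ⟨S, T, h⟩ := Phi_surj U
    exact ⟨(S, T), h⟩⟩

theorem Rpoly_formula (G : OGraph) {h : Matrix G.EState G.EState ℚ}
    (hh : Up edeg G.jdeg h.transpose) (hg : G.dmat * h * G.dmat = G.dmat) :
    G.Rpoly.map (PowerSeries.map (Int.castRingHom ℚ)) =
      ∑ S : G.EState, Polynomial.monomial (edeg S) (PowerSeries.monomial (G.jdeg S)
        ((1 - G.dmat * h - h * G.dmat) S S)) := by
  ext i j
  have hl : G.Rpoly.coeff i = if i < G.n + 1 then G.qdimH i else 0 := by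
    unfold Rpoly
    rw [Polynomial.finsetSum_coeff]
    simp [Polynomial.coeff_C_mul, Polynomial.coeff_X_pow]
  have hr : PowerSeries.coeff j ((∑ S : G.EState, Polynomial.monomial (edeg S)
      (PowerSeries.monomial (G.jdeg S) ((1 - G.dmat * h - h * G.dmat) S S))).coeff i)
      = ((1 - G.dmat * h - h * G.dmat) * E edeg G.jdeg i j).trace := by
    rw [Polynomial.finsetSum_coeff, map_sum, Matrix.trace]
    refine Finset.sum_congr rfl fun S _ => ?_
    rw [Matrix.diag_apply, E, Matrix.mul_diagonal, Polynomial.coeff_monomial]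
    by_cases h1 : edeg S = i
    · by_cases h2 : G.jdeg S = j
      · simp [h1, h2, PowerSeries.coeff_monomial]
      · simp [h1, h2, PowerSeries.coeff_monomial, Ne.symm h2]
    · simp [h1]
  rw [hr, ← finrank_Hmod hh hg, Polynomial.coeff_map, hl, PowerSeries.coeff_map]
  split_ifs with hi
  · simp [qdimH]
  · rw [finrank_Hmod hh hg]
    have : E (edeg (G := G)) G.jdeg i j = 0 := by
      unfold E
      rw [← Matrix.diagonal_zero]
      congr 1
      funext S
      have : edeg S ≤ G.n := by
        have := Finset.card_le_univ S.1
        simpa [edeg] using this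
      rw [if_neg (by omega)]
    rw [this]
    simp

theorem main (G₁ G₂ : OGraph) : (disj G₁ G₂).Rpoly = G₁.Rpoly * G₂.Rpoly := by
  have hinj : Function.Injective (Polynomial.map (PowerSeries.map (Int.castRingHom ℚ))) := by
    apply Polynomial.map_injective
    intro x y hxy
    ext n
    have := congrArg (PowerSeries.coeff n) hxy
    simpa using this
  apply hinj
  obtain ⟨h₁, hg₁, hh₁⟩ := exists_h edeg G₁.jdeg G₁.dmat (dmat_up G₁)
  obtain ⟨h₂, hg₂, hh₂⟩ := exists_h edeg G₂.jdeg G₂.dmat (dmat_up G₂)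
  have hD : (disj G₁ G₂).dmat =
      (tD edeg G₁.dmat G₂.dmat).submatrix (phi G₁ G₂).symm (phi G₁ G₂).symm := by
    ext U V
    obtain ⟨⟨S', T'⟩, rfl⟩ := (phi G₁ G₂).surjective U
    obtain ⟨⟨S, T⟩, rfl⟩ := (phi G₁ G₂).surjective V
    rw [Matrix.submatrix_apply, Equiv.symm_apply_apply, Equiv.symm_apply_apply]
    exact dmat_Phi S S' T T'
  have hH := tH_up (dmat_up G₁) hh₁ hh₂
  have hHg := tH_g (D' := G₂.dmat) (h' := h₂) (dmat_up G₁) hh₁ hg₁ (dmat_sq G₁) hg₂ (dmat_sq G₂)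
  have hP := tensor_htpy (D' := G₂.dmat) (h' := h₂) (dmat_up G₁) hh₁ hg₁ (dmat_sq G₁)
  set H := (tH edeg G₁.dmat h₁ h₂).submatrix (phi G₁ G₂).symm (phi G₁ G₂).symm with hHdef
  have h1 : Up edeg (disj G₁ G₂).jdeg H.transpose := by
    intro U V hUV
    obtain ⟨⟨S', T'⟩, rfl⟩ := (phi G₁ G₂).surjective U
    obtain ⟨⟨S, T⟩, rfl⟩ := (phi G₁ G₂).surjective V
    rw [Matrix.transpose_apply, hHdef, Matrix.submatrix_apply, Equiv.symm_apply_apply,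
      Equiv.symm_apply_apply] at hUV
    have := hH (S', T') (S, T) hUV
    show edeg (Phi S' T') = edeg (Phi S T) + 1 ∧ jdeg _ (Phi S' T') = jdeg _ (Phi S T)
    rw [Phi_edeg, Phi_edeg, Phi_jdeg, Phi_jdeg]
    exact this
  have h2 : (disj G₁ G₂).dmat * H * (disj G₁ G₂).dmat = (disj G₁ G₂).dmat := by
    rw [hD, hHdef, Matrix.submatrix_mul_equiv, Matrix.submatrix_mul_equiv, hHg]
  have h3 : ∀ S T, (1 - (disj G₁ G₂).dmat * H - H * (disj G₁ G₂).dmat) (Phi S T) (Phi S T) =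
      (1 - G₁.dmat * h₁ - h₁ * G₁.dmat) S S * (1 - G₂.dmat * h₂ - h₂ * G₂.dmat) T T := by
    intro S T
    have h4 := congrFun (congrFun hP (S, T)) (S, T)
    rw [Matrix.kronecker_apply] at h4
    rw [← h4, hD, hHdef, Matrix.submatrix_mul_equiv, Matrix.submatrix_mul_equiv]
    have h5 : (phi G₁ G₂).symm (Phi S T) = (S, T) := (phi G₁ G₂).symm_apply_apply (S, T)
    simp only [Matrix.sub_apply, Matrix.submatrix_apply, h5, Matrix.one_apply_eq]
  show Polynomial.map _ _ = Polynomial.map _ _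
  rw [Polynomial.map_mul, Rpoly_formula _ h1 h2, Rpoly_formula _ hh₁ hg₁, Rpoly_formula _ hh₂ hg₂,
    Finset.sum_mul_sum, ← (phi G₁ G₂).sum_comp, Fintype.sum_prod_type]
  refine Finset.sum_congr rfl fun S _ => Finset.sum_congr rfl fun T _ => ?_
  rw [Polynomial.monomial_mul_monomial, PowerSeries.monomial_mul_monomial, ← h3, ← Phi_edeg,
    ← Phi_jdeg]
  rfl

end
end OGraph

/-- the Poincaré polynomial is multiplicative under disjoint
union: `R_{G₁ ⊔ G₂}(t,q) = R_{G₁}(t,q) · R_{G₂}(t,q)`. -/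
theorem Rpoly_disjoint_union (G₁ G₂ : OGraph) :
    (OGraph.disj G₁ G₂).Rpoly = G₁.Rpoly * G₂.Rpoly := by
  exact OGraph.main G₁ G₂
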